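/- Let $N \ge 1$, $0 < m < 1$ with additionally $m > \frac{N-2}{N}$ when $N \ge 3$. Suppose $u \in L^\infty(0,\infty; L^1(\mathbb{R}^N))$ and for a nonnegative $\ell \in L^1_{loc}([0,\infty))$ the identity $\int_{\mathbb{R}^N}(u(x,t)-u_0(x))\phi(x)\,dx = \int_0^t \ell(t-s)\int_{\mathbb{R}^N}|u(x,s)|^{m-1}u(x,s)\Delta\phi(x)\,dx\,ds$ holds for a.e. $t > 0$ and all $\phi \in C_0^\infty(\mathbb{R}^N)$, where $u_0 \in L^1(\mathbb{R}^N)$. Then $\int_{\mathbb{R}^N} u(x,t)\,dx = \int_{\mathbb{R}^N} u_0(x)\,dx$ for a.e. $t > 0$. -/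

import Mathlib

open Set MeasureTheory

/-- The Laplacian of `f : ℝ^N → ℝ`, as the sum of second derivatives along the
standard coordinate directions. -/
noncomputable def lap {N : ℕ} (f : EuclideanSpace ℝ (Fin N) → ℝ)
    (x : EuclideanSpace ℝ (Fin N)) : ℝ :=
  ∑ i : Fin N, iteratedDeriv 2 (fun t : ℝ => f (x + t • EuclideanSpace.single i (1:ℝ))) 0

/-!
Test the equation with `φ (x / R)`, where `φ` is a cutoff with `φ 0 = 1`, and let `R → ∞`. The
left-hand side tends to `∫ (u - u₀)` by dominated convergence. On the right-hand side the Laplacian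
gains a factor `R⁻²` and lives on a set of volume of order `R ^ N`, so Jensen's inequality for the
concave power `m` bounds the flux integral by a multiple of `R ^ (N (1 - m) - 2) ‖u‖₁ ^ m`. This
tends to `0`, uniformly in time, exactly when `m > (N - 2) / N`.
-/

open Filter Module
open scoped Topology ContDiff Laplacian

theorem iteratedDeriv_comp_add_smul {𝕜 E F : Type*} [NontriviallyNormedField 𝕜]
    [NormedAddCommGroup E] [NormedSpace 𝕜 E] [NormedAddCommGroup F] [NormedSpace 𝕜 F] {n : ℕ}
    {f : E → F} (hf : ContDiff 𝕜 n f) (x v : E) (t : 𝕜) :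
    iteratedDeriv n (fun s => f (x + s • v)) t =
      iteratedFDeriv 𝕜 n f (x + t • v) fun _ => v := by
  have hshift : ContDiff 𝕜 n fun y => f (x + y) := by fun_prop
  have hline := (ContinuousLinearMap.toSpanSingleton 𝕜 v).iteratedFDeriv_comp_right hshift t le_rfl
  rw [iteratedFDeriv_comp_add_left] at hline
  rw [iteratedDeriv_eq_iteratedFDeriv]
  simpa [Function.comp_def] using DFunLike.congr_fun hline fun _ => 1

section Laplacian

variable {E F : Type*} [NormedAddCommGroup E] [InnerProductSpace ℝ E] [FiniteDimensional ℝ E]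
  [NormedAddCommGroup F] [NormedSpace ℝ F] {f : E → F}

theorem laplacian_comp_const_smul (hf : ContDiff ℝ 2 f) (c : ℝ) (x : E) :
    Δ (fun y => f (c • y)) x = c ^ 2 • Δ f (c • x) := by
  simp only [InnerProductSpace.laplacian_eq_iteratedFDeriv_stdOrthonormalBasis,
    iteratedFDeriv_comp_const_smul c hf, smul_apply, Finset.smul_sum]

theorem continuous_laplacian (hf : ContDiff ℝ 2 f) : Continuous (Δ f) := by
  rw [InnerProductSpace.laplacian_eq_iteratedFDeriv_stdOrthonormalBasis]
  have hcont := hf.continuous_iteratedFDeriv (m := 2) le_rfl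
  fun_prop

theorem support_laplacian_subset (f : E → F) : Function.support (Δ f) ⊆ tsupport f := by
  intro x hx
  contrapose! hx
  have hzero : iteratedFDeriv ℝ 2 f x = 0 :=
    Function.notMem_support.1 fun h => hx (support_iteratedFDeriv_subset 2 h)
  rw [Function.notMem_support]
  simp [InnerProductSpace.laplacian_eq_iteratedFDeriv_stdOrthonormalBasis, hzero]

theorem exists_norm_laplacian_le (hf : ContDiff ℝ 2 f) (hc : HasCompactSupport f) :
    ∃ K, ∀ x, ‖Δ f x‖ ≤ K :=
  (continuous_laplacian hf).bounded_above_of_compact_support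
    (hc.mono' (support_laplacian_subset f))

theorem lap_eq_laplacian {N : ℕ} {f : EuclideanSpace ℝ (Fin N) → ℝ} (hf : ContDiff ℝ 2 f) :
    lap f = Δ f := by
  rw [InnerProductSpace.laplacian_eq_iteratedFDeriv_orthonormalBasis f
    (EuclideanSpace.basisFun (Fin N) ℝ)]
  ext x
  refine Finset.sum_congr rfl fun i _ => ?_
  rw [iteratedDeriv_comp_add_smul hf, zero_smul, add_zero, EuclideanSpace.basisFun_apply]
  congr 1
  ext1 j
  fin_cases j <;> rfl

end Laplacian

section Flux

theorem abs_abs_rpow_sub_one_mul_self {m : ℝ} (hm : m ≠ 0) (a : ℝ) :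
    |(|a| ^ (m - 1) * a)| = |a| ^ m := by
  rw [abs_mul, abs_of_nonneg (Real.rpow_nonneg (abs_nonneg a) _)]
  obtain rfl | ha := eq_or_ne a 0
  · simp [Real.zero_rpow hm]
  · rw [Real.rpow_sub_one (abs_ne_zero.2 ha), div_mul_cancel₀ _ (abs_ne_zero.2 ha)]

variable {α F : Type*} {mα : MeasurableSpace α} {μ : Measure α} [NormedAddCommGroup F]
  {m : ℝ}

theorem integrable_norm_rpow_of_le_one [IsFiniteMeasure μ] {f : α → F} (hf : Integrable f μ)
    (hm0 : 0 ≤ m) (hm1 : m ≤ 1) : Integrable (fun x => ‖f x‖ ^ m) μ := by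
  have hfm : MemLp f (ENNReal.ofReal m) μ :=
    (memLp_one_iff_integrable.2 hf).mono_exponent (ENNReal.ofReal_le_one.2 hm1)
  simpa only [ENNReal.toReal_ofReal hm0] using hfm.integrable_norm_rpow'

theorem integral_norm_rpow_le_of_le_one [IsFiniteMeasure μ] {f : α → F} (hf : Integrable f μ)
    (hm0 : 0 ≤ m) (hm1 : m ≤ 1) :
    ∫ x, ‖f x‖ ^ m ∂μ ≤ (∫ x, ‖f x‖ ∂μ) ^ m * μ.real univ ^ (1 - m) := by
  obtain rfl | hμ := eq_or_ne μ 0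
  · simp only [integral_zero_measure]; positivity
  have : NeZero μ := ⟨hμ⟩
  have hμpos : 0 < μ.real univ := measureReal_univ_pos
  have jensen : (⨍ x, ‖f x‖ ^ m ∂μ) ≤ (⨍ x, ‖f x‖ ∂μ) ^ m :=
    (Real.concaveOn_rpow hm0 hm1).le_map_average (continuousOn_id.rpow_const fun _ _ => .inr hm0)
      isClosed_Ici (.of_forall fun x => norm_nonneg (f x)) hf.norm
      (integrable_norm_rpow_of_le_one hf hm0 hm1)
  rw [average_eq, average_eq, smul_eq_mul, smul_eq_mul, inv_mul_le_iff₀ hμpos] at jensen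
  refine jensen.trans_eq ?_
  rw [Real.mul_rpow (by positivity) (by positivity), Real.inv_rpow hμpos.le,
    Real.rpow_sub hμpos, Real.rpow_one]
  ring

theorem abs_integral_abs_rpow_sub_one_mul_le {f ψ : α → ℝ} {s : Set α} {K : ℝ}
    (hf : Integrable f μ) (hm0 : 0 < m) (hm1 : m ≤ 1) (hμs : μ s ≠ ⊤)
    (hK : 0 ≤ K) (hψ : ∀ x, |ψ x| ≤ K) (hψs : Function.support ψ ⊆ s) :
    |∫ x, |f x| ^ (m - 1) * f x * ψ x ∂μ| ≤
      K * ((∫ x, |f x| ∂μ) ^ m * μ.real s ^ (1 - m)) := by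
  have : IsFiniteMeasure (μ.restrict s) := isFiniteMeasure_restrict.2 hμs
  have pointwise (x : α) : ‖|f x| ^ (m - 1) * f x * ψ x‖ ≤ K * ‖f x‖ ^ m := by
    rw [norm_mul, Real.norm_eq_abs, abs_abs_rpow_sub_one_mul_self hm0.ne', mul_comm K]
    exact mul_le_mul_of_nonneg_left (hψ x) (by positivity)
  have vanish (x : α) (hx : x ∉ s) : |f x| ^ (m - 1) * f x * ψ x = 0 := by
    rw [Function.notMem_support.1 fun h => hx (hψs h), mul_zero]
  rw [← setIntegral_eq_integral_of_forall_compl_eq_zero vanish]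
  calc |∫ x in s, |f x| ^ (m - 1) * f x * ψ x ∂μ|
      ≤ ∫ x in s, K * ‖f x‖ ^ m ∂μ :=
        norm_integral_le_of_norm_le
          ((integrable_norm_rpow_of_le_one hf.integrableOn hm0.le hm1).const_mul K)
          (.of_forall pointwise)
    _ ≤ K * ((∫ x in s, ‖f x‖ ∂μ) ^ m * (μ.restrict s).real univ ^ (1 - m)) := by
        rw [integral_const_mul]
        gcongr
        exact integral_norm_rpow_le_of_le_one hf.integrableOn hm0.le hm1
    _ ≤ K * ((∫ x, |f x| ∂μ) ^ m * μ.real s ^ (1 - m)) := by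
        rw [measureReal_restrict_apply_univ]
        gcongr
        exact setIntegral_le_integral hf.norm (.of_forall fun x => norm_nonneg (f x))

end Flux

section Rescaling

theorem tendsto_integral_mul_comp_inv_smul {E : Type*} [NormedAddCommGroup E] [NormedSpace ℝ E]
    [MeasurableSpace E] [OpensMeasurableSpace E] [SecondCountableTopology E] {μ : Measure E}
    {g φ : E → ℝ} {K : ℝ} (hg : Integrable g μ) (hφ : Continuous φ) (hK : ∀ x, |φ x| ≤ K) :
    Tendsto (fun R : ℝ => ∫ x, g x * φ (R⁻¹ • x) ∂μ) atTop (𝓝 ((∫ x, g x ∂μ) * φ 0)) := by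
  rw [← integral_mul_const]
  refine tendsto_integral_filter_of_dominated_convergence (fun x => |g x| * K)
    (.of_forall fun R => hg.aestronglyMeasurable.mul
      (hφ.comp (continuous_const_smul R⁻¹)).aestronglyMeasurable) ?_ (hg.abs.mul_const K) ?_
  · refine .of_forall fun R => .of_forall fun x => ?_
    rw [norm_mul, Real.norm_eq_abs]
    gcongr
    exact hK _
  · refine .of_forall fun x => Tendsto.const_mul _ ?_
    have hscale : Tendsto (fun R : ℝ => R⁻¹ • x) atTop (𝓝 0) := by
      simpa only [zero_smul] using
        (tendsto_inv_atTop_zero (𝕜 := ℝ)).smul_const x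
    exact (hφ.tendsto 0).comp hscale

variable {E : Type*} [NormedAddCommGroup E] [InnerProductSpace ℝ E] [FiniteDimensional ℝ E]
  [MeasurableSpace E] [BorelSpace E] {μ : Measure E} [μ.IsAddHaarMeasure] {m : ℝ}

theorem exists_abs_integral_mul_laplacian_comp_inv_smul_le {φ : E → ℝ} (hφ : ContDiff ℝ 2 φ)
    (hc : HasCompactSupport φ) (hm0 : 0 < m) (hm1 : m ≤ 1) :
    ∃ A, 0 ≤ A ∧ ∀ R > 0, ∀ f : E → ℝ, Integrable f μ →
      |∫ x, |f x| ^ (m - 1) * f x * Δ (fun y => φ (R⁻¹ • y)) x ∂μ| ≤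
        A * R ^ (finrank ℝ E * (1 - m) - 2) * (∫ x, |f x| ∂μ) ^ m := by
  obtain ⟨K, hK⟩ := exists_norm_laplacian_le hφ hc
  have hK0 : 0 ≤ K := (norm_nonneg _).trans (hK 0)
  refine ⟨K * μ.real (tsupport φ) ^ (1 - m), by positivity, fun R hR f hf => ?_⟩
  have bound (x : E) : |Δ (fun y => φ (R⁻¹ • y)) x| ≤ R⁻¹ ^ 2 * K := by
    rw [laplacian_comp_const_smul hφ, smul_eq_mul, abs_mul, abs_of_nonneg (by positivity)]
    gcongr
    exact hK _
  have support_subset : Function.support (Δ fun y => φ (R⁻¹ • y)) ⊆ (R⁻¹ • ·) ⁻¹' tsupport φ :=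
    (support_laplacian_subset _).trans
      (tsupport_comp_subset_preimage φ (continuous_const_smul R⁻¹))
  have volume_eq : μ ((R⁻¹ • ·) ⁻¹' tsupport φ) =
      ENNReal.ofReal (R ^ finrank ℝ E) * μ (tsupport φ) := by
    rw [Measure.addHaar_preimage_smul μ (inv_ne_zero hR.ne'), inv_pow, inv_inv,
      abs_of_nonneg (by positivity)]
  have volume_ne_top : μ ((R⁻¹ • ·) ⁻¹' tsupport φ) ≠ ⊤ := by
    rw [volume_eq]
    exact ENNReal.mul_ne_top ENNReal.ofReal_ne_top hc.isCompact.measure_ne_top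
  refine (abs_integral_abs_rpow_sub_one_mul_le hf hm0 hm1 volume_ne_top
    (by positivity) bound support_subset).trans_eq ?_
  have power_eq : R⁻¹ ^ 2 * (R ^ finrank ℝ E) ^ (1 - m) = R ^ (finrank ℝ E * (1 - m) - 2) := by
    rw [Real.rpow_sub hR, Real.rpow_mul hR.le, Real.rpow_natCast, Real.rpow_two, inv_pow,
      div_eq_inv_mul]
  rw [← power_eq, measureReal_def, volume_eq, ENNReal.toReal_mul,
    ENNReal.toReal_ofReal (by positivity), ← measureReal_def,
    Real.mul_rpow (by positivity) (by positivity)]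
  ring

end Rescaling

section MassConservation

theorem abs_intervalIntegral_comp_sub_mul_le {k G : ℝ → ℝ} {t M : ℝ} (ht : 0 ≤ t)
    (hk : IntervalIntegrable k volume 0 t) (hG : ∀ s ∈ Ioc 0 t, |G s| ≤ M) :
    |∫ s in (0 : ℝ)..t, k (t - s) * G s| ≤ (∫ s in (0 : ℝ)..t, |k s|) * M := by
  have hk_reflected : IntervalIntegrable (fun s => k (t - s)) volume 0 t := by
    simpa only [sub_zero, sub_self] using (hk.comp_sub_left t).symm
  calc |∫ s in (0 : ℝ)..t, k (t - s) * G s|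
      ≤ ∫ s in (0 : ℝ)..t, |k (t - s)| * M := by
        rw [← Real.norm_eq_abs]
        refine intervalIntegral.norm_integral_le_of_norm_le ht (.of_forall fun s hs => ?_)
          (hk_reflected.abs.mul_const M)
        rw [norm_mul, Real.norm_eq_abs]
        gcongr
        exact hG s hs
    _ = (∫ s in (0 : ℝ)..t, |k s|) * M := by
        rw [intervalIntegral.integral_mul_const,
          intervalIntegral.integral_comp_sub_left (fun s => |k s|) t, sub_self, sub_zero]

theorem natCast_mul_one_sub_lt_two {N : ℕ} {m : ℝ} (hm0 : 0 < m)
    (hmN : 3 ≤ N → (N - 2 : ℝ) / N < m) : N * (1 - m) < 2 := by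
  obtain hN | hN := Nat.lt_or_ge N 3
  · interval_cases N <;> norm_num <;> linarith
  · have hcrit := hmN hN
    rw [div_lt_iff₀ (by positivity)] at hcrit
    linarith

variable {E : Type*} [NormedAddCommGroup E] [InnerProductSpace ℝ E] [FiniteDimensional ℝ E]
  [MeasurableSpace E] [BorelSpace E] {m : ℝ} {u : ℝ → E → ℝ} {ℓ : ℝ → ℝ}

theorem tendsto_memory_integral_laplacian_comp_inv_smul {μ : Measure E} [μ.IsAddHaarMeasure]
    {t C : ℝ} (hm0 : 0 < m) (hm1 : m ≤ 1) (hmd : finrank ℝ E * (1 - m) < 2) (ht : 0 ≤ t)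
    (hu_int : ∀ s ∈ Ioc 0 t, Integrable (u s) μ) (hu_bdd : ∀ s ∈ Ioc 0 t, ∫ x, |u s x| ∂μ ≤ C)
    (hℓ : IntervalIntegrable ℓ volume 0 t) {φ : E → ℝ} (hφ : ContDiff ℝ 2 φ)
    (hc : HasCompactSupport φ) :
    Tendsto (fun R : ℝ => ∫ s in (0 : ℝ)..t,
      ℓ (t - s) * ∫ x, |u s x| ^ (m - 1) * u s x * Δ (fun y => φ (R⁻¹ • y)) x ∂μ)
      atTop (𝓝 0) := by
  obtain ⟨A, hA, hflux⟩ :=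
    exists_abs_integral_mul_laplacian_comp_inv_smul_le (μ := μ) hφ hc hm0 hm1
  have decay : Tendsto (fun R : ℝ => R ^ (finrank ℝ E * (1 - m) - 2)) atTop (𝓝 0) := by
    simpa only [neg_sub] using tendsto_rpow_neg_atTop (sub_pos.2 hmd)
  have bound_tendsto : Tendsto (fun R : ℝ => (∫ s in (0 : ℝ)..t, |ℓ s|) *
      (A * R ^ (finrank ℝ E * (1 - m) - 2) * C ^ m)) atTop (𝓝 0) := by
    simpa using ((decay.const_mul A).mul_const (C ^ m)).const_mul (∫ s in (0 : ℝ)..t, |ℓ s|)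
  refine squeeze_zero_norm' ?_ bound_tendsto
  filter_upwards [eventually_gt_atTop 0] with R hR
  refine abs_intervalIntegral_comp_sub_mul_le ht hℓ fun s hs => ?_
  refine (hflux R hR (u s) (hu_int s hs)).trans ?_
  gcongr
  exact hu_bdd s hs

theorem stmt11_general {u0 : E → ℝ} (hm0 : 0 < m) (hm1 : m ≤ 1)
    (hmd : finrank ℝ E * (1 - m) < 2) (hu0 : Integrable u0)
    (hu_int : ∀ t > (0 : ℝ), Integrable (u t))
    (hu_bdd : ∀ T : ℝ, ∃ C : ℝ, ∀ t ∈ Ioc 0 T, ∫ x, |u t x| ≤ C)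
    (hℓ_loc : LocallyIntegrableOn ℓ (Ici 0))
    (hweak : ∀ φ : E → ℝ, ContDiff ℝ ∞ φ → HasCompactSupport φ → ∀ᵐ t : ℝ, 0 < t →
      ∫ x, (u t x - u0 x) * φ x =
        ∫ s in (0 : ℝ)..t, ℓ (t - s) * ∫ x, |u s x| ^ (m - 1) * u s x * Δ φ x) :
    ∀ᵐ t : ℝ, 0 < t → ∫ x, u t x = ∫ x, u0 x := by
  let b : ContDiffBump (0 : E) := ⟨1, 2, one_pos, one_lt_two⟩
  have b_zero : b 0 = 1 := b.one_of_mem_closedBall (Metric.mem_closedBall_self zero_le_one)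
  have R_tendsto : Tendsto (fun n : ℕ => (n + 1 : ℝ)) atTop atTop :=
    tendsto_atTop_add_const_right _ 1 tendsto_natCast_atTop_atTop
  -- The exceptional null set of times depends on the test function, so only countably many
  -- cutoff radii are used.
  have weak_cutoff := ae_all_iff.2 fun n : ℕ => hweak (fun x => b ((n + 1 : ℝ)⁻¹ • x))
    (b.contDiff.comp (contDiff_const_smul _))
    (b.hasCompactSupport.comp_smul (inv_ne_zero n.cast_add_one_ne_zero))
  filter_upwards [weak_cutoff] with t weak_t ht
  obtain ⟨C, hC⟩ := hu_bdd t
  have ℓ_int : IntervalIntegrable ℓ volume 0 t :=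
    (intervalIntegrable_iff_integrableOn_Icc_of_le ht.le).2
      (hℓ_loc.integrableOn_compact_subset Icc_subset_Ici_self isCompact_Icc)
  have mass_tendsto := (tendsto_integral_mul_comp_inv_smul ((hu_int t ht).sub hu0) b.continuous
    fun x => (abs_of_nonneg b.nonneg).trans_le b.le_one).comp R_tendsto
  have flux_tendsto := (tendsto_memory_integral_laplacian_comp_inv_smul hm0 hm1 hmd ht.le
    (fun s hs => hu_int s hs.1) hC ℓ_int b.contDiff b.hasCompactSupport).comp R_tendsto
  have mass_diff := tendsto_nhds_unique mass_tendsto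
    (flux_tendsto.congr fun n => (weak_t n ht).symm)
  rw [b_zero, mul_one, integral_sub' (hu_int t ht) hu0] at mass_diff
  exact sub_eq_zero.1 mass_diff

end MassConservation

theorem stmt11 (N : ℕ) (hN : 1 ≤ N) (m : ℝ) (hm0 : 0 < m) (hm1 : m < 1)
    (hmN : 3 ≤ N → (N - 2 : ℝ) / N < m)
    (u : ℝ → EuclideanSpace ℝ (Fin N) → ℝ)
    (u0 : EuclideanSpace ℝ (Fin N) → ℝ) (hu0 : Integrable u0)
    -- u ∈ L^∞(0,∞;L¹(ℝ^N))
    (hu_int : ∀ t > (0:ℝ), Integrable (u t))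
    (hu_bdd : ∃ C : ℝ, ∀ t > (0:ℝ), (∫ x, |u t x|) ≤ C)
    (ℓ : ℝ → ℝ) (hℓ_nonneg : ∀ t, 0 ≤ ℓ t)
    (hℓ_loc : LocallyIntegrableOn ℓ (Ici 0))
    -- the weak formulation of ∂_t(k∗[u-u₀]) = Δ(|u|^{m-1}u)
    (hweak : ∀ φ : EuclideanSpace ℝ (Fin N) → ℝ, ContDiff ℝ (⊤ : ℕ∞) φ → HasCompactSupport φ →
      ∀ᵐ t : ℝ, 0 < t →
        (∫ x, (u t x - u0 x) * φ x) =
          ∫ s in (0:ℝ)..t, ℓ (t - s) * ∫ x, |u s x| ^ (m - 1) * u s x * lap φ x) :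
    ∀ᵐ t : ℝ, 0 < t → (∫ x, u t x) = ∫ x, u0 x := by
  exact stmt11_general hm0 hm1.le
    (by simpa only [finrank_euclideanSpace_fin] using natCast_mul_one_sub_lt_two hm0 hmN) hu0 hu_int
    (fun _ => hu_bdd.imp fun C hC t ht => hC t ht.1) hℓ_loc
    fun φ hφ hc => lap_eq_laplacian (contDiff_infty.1 hφ 2) ▸ hweak φ hφ hc
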